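/- Every unary polynomial F of K with F({q⁰,q¹,q²}) ⊆ {q⁰,q¹,q²} is order-preserving on {q⁰,q¹,q²} with respect to the componentwise order (where B(T) is ordered by x ≤ y iff x=0, or x=y, or (x=P₂ and y∈{P₀,P₁})). (Lemma 4.2(4).) -/

import Mathlib

namespace Paper

/-- Direction of a Turing-machine head move. -/
inductive Dir : Type
  | L | R
deriving DecidableEq

/-- A Turing machine with states μ₀, μ₁, …, μ_k (μ₀ the halting state): for each state
μ_i with 1 ≤ i ≤ k and each tape symbol r, exactly one instruction μ_i r s D μ_m,
recorded as `instr i r = (s, D, m)`.  (The value of `instr` at `i = 0` is irrelevant: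
no instruction begins with μ₀.) -/
structure TM (k : ℕ) : Type where
  instr : Fin (k + 1) → Bool → Bool × Dir × Fin (k + 1)

/-- The universe of the algebra B(T):
`zero` = 0, `P j` = P_j, `one`,`two`,`H` the sequential elements U, and the machine
elements `C b i r s` = C_{ir}^s, `D b i r s` = D_{ir}^s, `M b i r` = M_i^r, where
`b = true` marks the barred copy V̄. -/
inductive BT (k : ℕ) : Type
  | zero : BT k
  | P : Fin 3 → BT k
  | one : BT k
  | two : BT k
  | H : BT k
  | C : Bool → Fin (k + 1) → Bool → Bool → BT k
  | D : Bool → Fin (k + 1) → Bool → Bool → BT k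
  | M : Bool → Fin (k + 1) → Bool → BT k
deriving DecidableEq

namespace BT

variable {k : ℕ}

/-- The partial order of B(T): x ≤ y iff x = 0, or x = y, or (x = P₂ and y ∈ {P₀,P₁}). -/
def le (x y : BT k) : Prop :=
  x = zero ∨ x = y ∨ (x = P 2 ∧ (y = P 0 ∨ y = P 1))

/-- x ∧ y: the greatest lower bound for `le`. -/
def meet (x y : BT k) : BT k :=
  if x = y then x
  else if x = P 2 ∧ (y = P 0 ∨ y = P 1) then P 2
  else if y = P 2 ∧ (x = P 0 ∨ x = P 1) then P 2
  else if (x = P 0 ∨ x = P 1) ∧ (y = P 0 ∨ y = P 1) then P 2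
  else zero

/-- membership in P = {P₀,P₁,P₂} -/
def isP : BT k → Bool
  | P _ => true
  | _ => false

/-- membership in U = {1,2,H} -/
def isU : BT k → Bool
  | one => true
  | two => true
  | H => true
  | _ => false

/-- membership in V ∪ V̄ -/
def isVV : BT k → Bool
  | C _ _ _ _ => true
  | D _ _ _ _ => true
  | M _ _ _ => true
  | _ => false

/-- membership in U ∪ V ∪ V̄ -/
def isUVV (x : BT k) : Bool := isU x || isVV x

/-- membership in V₀ = {C_{0r}^s, D_{0r}^s, M₀^r} (unbarred, state μ₀) -/
def isV0 : BT k → Bool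
  | C false i _ _ => i == 0
  | D false i _ _ => i == 0
  | M false i _ => i == 0
  | _ => false

/-- membership in V₁₀⁰ = {C₁₀⁰, M₁⁰, D₁₀⁰} -/
def isV10 (x : BT k) : Bool :=
  x == C false 1 false false || x == M false 1 false || x == D false 1 false false

/-- the bar involution on V ∪ V̄ (identity elsewhere) -/
def barOp : BT k → BT k
  | C b i r s => C (!b) i r s
  | D b i r s => D (!b) i r s
  | M b i r => M (!b) i r
  | x => x

/-- s₀ = C₁₀⁰, s₁ = M₁⁰, s₂ = D₁₀⁰ -/
def sel : Fin 3 → BT k := ![C false 1 false false, M false 1 false, D false 1 false false]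

/-- x ∧ⁱ y = x if x = y ∈ (P ∪ V₁₀⁰) \ {s_i}, else 0. -/
def meetI (i : Fin 3) (x y : BT k) : BT k :=
  if x = y ∧ (isP x ∨ isV10 x) ∧ x ≠ sel i then x else zero

/-- T₀(x) = P₂ if x ∈ {P₀,P₂}; P₀ if x = P₁; x if x ∈ V₀; else 0. -/
def T0 : BT k → BT k
  | P j => if j = 1 then P 0 else P 2
  | C false i r s => if i = 0 then C false i r s else zero
  | D false i r s => if i = 0 then D false i r s else zero
  | M false i r => if i = 0 then M false i r else zero
  | _ => zero

/-- T₁(x,y). -/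
def T1 (x y : BT k) : BT k :=
  if (x = P 0 ∧ y = P 0) ∨ (x = P 0 ∧ y = P 1) ∨ (x = P 1 ∧ y = P 0) ∨
     (x = P 0 ∧ y = P 2) ∨ (x = P 2 ∧ y = P 0) then P 1
  else if (x = P 1 ∨ x = P 2) ∧ (y = P 1 ∨ y = P 2) then P 2
  else if x = y ∧ isV10 x then x
  else zero

/-- J′(x,y,z) = x ∧ z if x = y or {x,y} ⊆ P; x if x = ȳ ∈ V ∪ V̄; else 0. -/
def J' (x y z : BT k) : BT k :=
  if x = y ∨ (isP x ∧ isP y) then meet x z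
  else if isVV y ∧ x = barOp y then x
  else zero

/-- the ternary discriminator: t(x,y,z) = z if x = y, else x. -/
def disc (x y z : BT k) : BT k := if x = y then z else x

/-- S₁(u,x,y,z). -/
def S1 (u x y z : BT k) : BT k :=
  if (u = one ∨ u = two) ∧ x = y ∧ y = z ∧ isUVV x then x
  else if isP x ∧ isP y ∧ isP z then disc x y z
  else zero

/-- S₂(u,v,x,y,z). -/
def S2 (u v x y z : BT k) : BT k :=
  if isVV v ∧ u = barOp v ∧ x = y ∧ y = z ∧ isVV x then x
  else if isP x ∧ isP y ∧ isP z then disc x y z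
  else zero

/-- L_{irt} for the instruction μ_i r s L μ_m (the barred clause is handled by carrying
the bar `b` of the argument through). -/
def Lop (i : Fin (k + 1)) (r s : Bool) (m : Fin (k + 1)) (t : Bool) :
    BT k → BT k → BT k → BT k := fun x y u =>
  match u with
  | P j => if x = one ∧ y = one then P j else zero
  | C b i' r' s' =>
      if x = one ∧ y = one ∧ i' = i ∧ r' = r then C b m t s'
      else if x = H ∧ y = one ∧ i' = i ∧ r' = r ∧ s' = t then M b m t
      else zero
  | M b i' r' => if x = two ∧ y = H ∧ i' = i ∧ r' = r then D b m t s else zero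
  | D b i' r' s' => if x = two ∧ y = two ∧ i' = i ∧ r' = r then D b m t s' else zero
  | _ => zero

/-- R_{irt} for the instruction μ_i r s R μ_m. -/
def Rop (i : Fin (k + 1)) (r s : Bool) (m : Fin (k + 1)) (t : Bool) :
    BT k → BT k → BT k → BT k := fun x y u =>
  match u with
  | P j => if x = one ∧ y = one then P j else zero
  | C b i' r' s' => if x = one ∧ y = one ∧ i' = i ∧ r' = r then C b m t s' else zero
  | M b i' r' => if x = H ∧ y = one ∧ i' = i ∧ r' = r then C b m t s else zero
  | D b i' r' s' =>
      if x = two ∧ y = H ∧ i' = i ∧ r' = r ∧ s' = t then M b m t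
      else if x = two ∧ y = two ∧ i' = i ∧ r' = r then D b m t s'
      else zero
  | _ => zero

end BT

/-- The forward machine operation determined by the unique instruction of T beginning
with μ_i r (for 1 ≤ i ≤ k) and the symbol t. -/
def fwd {k : ℕ} (T : TM k) (i : Fin (k + 1)) (r t : Bool) :
    BT k → BT k → BT k → BT k :=
  match T.instr i r with
  | (s, Dir.L, m) => BT.Lop i r s m t
  | (s, Dir.R, m) => BT.Rop i r s m t

/-- the reverse of a machine operation: F°(x,y,u) = v when F(x,y,v) = u ≠ 0, else 0. -/
noncomputable def revOp {k : ℕ} (F : BT k → BT k → BT k → BT k) (x y u : BT k) : BT k :=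
  haveI := Classical.propDecidable (u ≠ BT.zero ∧ ∃ v, F x y v = u)
  if h : u ≠ BT.zero ∧ ∃ v, F x y v = u then h.2.choose else BT.zero

/-- The machine operations ℳ: `b = false` gives the forward operation, `b = true` the
reverse operation. -/
noncomputable def mop {k : ℕ} (T : TM k) (i : Fin (k + 1)) (r t : Bool) (b : Bool) :
    BT k → BT k → BT k → BT k :=
  match b with
  | false => fwd T i r t
  | true => revOp (fwd T i r t)

/-- The relation ≺ on U: 2≺2, 2≺H, H≺1, 1≺1. -/
def prec {k : ℕ} : BT k → BT k → Bool
  | BT.two, BT.two => true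
  | BT.two, BT.H => true
  | BT.H, BT.one => true
  | BT.one, BT.one => true
  | _, _ => false

/-- U_i¹ built from the machine operation F. -/
def U1op {k : ℕ} (F : BT k → BT k → BT k → BT k) (x y z u : BT k) : BT k :=
  if prec x y ∧ prec x z ∧ y ≠ z ∧ BT.isVV (F x y u) then BT.barOp (F x y u)
  else if prec x y ∧ y = z then F x y u
  else BT.zero

/-- U_i² built from the machine operation F. -/
def U2op {k : ℕ} (F : BT k → BT k → BT k → BT k) (x y z u : BT k) : BT k :=
  if prec x z ∧ prec y z ∧ x ≠ y ∧ BT.isVV (F y z u) then BT.barOp (F y z u)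
  else if x = y ∧ prec y z then F y z u
  else BT.zero

/-- The n-ary polynomials of the algebra B(T): functions obtained by composing the basic
operations (the constant 0, T₀, T₁, ∧, ∧⁰, ∧¹, ∧², J′, S₁, S₂, the forward and reverse
machine operations, and the U_i¹, U_i²), coordinate projections and constants. -/
inductive PolyB {k : ℕ} (T : TM k) : {n : ℕ} → ((Fin n → BT k) → BT k) → Prop where
  | proj {n : ℕ} (i : Fin n) : PolyB T fun v => v i
  | const {n : ℕ} (c : BT k) : PolyB T fun _ : Fin n → BT k => c
  | t0 {n : ℕ} {p : (Fin n → BT k) → BT k} :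
      PolyB T p → PolyB T fun v => BT.T0 (p v)
  | t1 {n : ℕ} {p q : (Fin n → BT k) → BT k} :
      PolyB T p → PolyB T q → PolyB T fun v => BT.T1 (p v) (q v)
  | meet {n : ℕ} {p q : (Fin n → BT k) → BT k} :
      PolyB T p → PolyB T q → PolyB T fun v => BT.meet (p v) (q v)
  | meetI (j : Fin 3) {n : ℕ} {p q : (Fin n → BT k) → BT k} :
      PolyB T p → PolyB T q → PolyB T fun v => BT.meetI j (p v) (q v)
  | jop {n : ℕ} {p q r : (Fin n → BT k) → BT k} :
      PolyB T p → PolyB T q → PolyB T r → PolyB T fun v => BT.J' (p v) (q v) (r v)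
  | s1 {n : ℕ} {p q r s : (Fin n → BT k) → BT k} :
      PolyB T p → PolyB T q → PolyB T r → PolyB T s →
      PolyB T fun v => BT.S1 (p v) (q v) (r v) (s v)
  | s2 {n : ℕ} {p q r s w : (Fin n → BT k) → BT k} :
      PolyB T p → PolyB T q → PolyB T r → PolyB T s → PolyB T w →
      PolyB T fun v => BT.S2 (p v) (q v) (r v) (s v) (w v)
  | mach (i : Fin (k + 1)) (hi : i ≠ 0) (r t b : Bool) {n : ℕ}
      {p q u : (Fin n → BT k) → BT k} :
      PolyB T p → PolyB T q → PolyB T u →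
      PolyB T fun v => mop T i r t b (p v) (q v) (u v)
  | u1 (i : Fin (k + 1)) (hi : i ≠ 0) (r t b : Bool) {n : ℕ}
      {p q r' s : (Fin n → BT k) → BT k} :
      PolyB T p → PolyB T q → PolyB T r' → PolyB T s →
      PolyB T fun v => U1op (mop T i r t b) (p v) (q v) (r' v) (s v)
  | u2 (i : Fin (k + 1)) (hi : i ≠ 0) (r t b : Bool) {n : ℕ}
      {p q r' s : (Fin n → BT k) → BT k} :
      PolyB T p → PolyB T q → PolyB T r' → PolyB T s →
      PolyB T fun v => U2op (mop T i r t b) (p v) (q v) (r' v) (s v)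

/-- unary polynomials of B(T) -/
def UPolyB {k : ℕ} (T : TM k) (F : BT k → BT k) : Prop :=
  PolyB T (n := 1) fun v => F (v 0)

/-- binary polynomials of B(T) -/
def BPolyB {k : ℕ} (T : TM k) (F : BT k → BT k → BT k) : Prop :=
  PolyB T (n := 2) fun v => F (v 0) (v 1)

/-- A Turing machine configuration ⟨tape, head position, state⟩. -/
structure Cfg (k : ℕ) : Type where
  tape : ℤ → Bool
  pos : ℤ
  state : Fin (k + 1)

/-- One computation step of T (halted configurations, in state μ₀, are fixed). -/
def cfgStep {k : ℕ} (T : TM k) (c : Cfg k) : Cfg k :=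
  if c.state = 0 then c
  else
    match T.instr c.state (c.tape c.pos) with
    | (s, Dir.L, m) => ⟨Function.update c.tape c.pos s, c.pos - 1, m⟩
    | (s, Dir.R, m) => ⟨Function.update c.tape c.pos s, c.pos + 1, m⟩

/-- The initial configuration Q₀ = ⟨t₀, 0, μ₁⟩, t₀ the all-zero tape. -/
def Q0 (k : ℕ) : Cfg k := ⟨fun _ => false, 0, 1⟩

/-- N = {n₀,…,n_m} ∪ {−1,0,1}: the squares visited during the halting computation
Q₀, …, Q_m, together with −1, 0, 1. -/
def Nset {k : ℕ} (T : TM k) (m : ℕ) : Finset ℤ :=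
  ((Finset.range (m + 1)).image fun j => ((cfgStep T)^[j] (Q0 k)).pos) ∪ {-1, 0, 1}

/-- The universe of the direct power A = B(T)^Y, where Y = {s₀} ∪ N: the coordinate
`none` is the extra coordinate s₀ ∉ N, and `some x` the coordinate x ∈ N. -/
abbrev AA {k : ℕ} (T : TM k) (m : ℕ) : Type := Option {x : ℤ // x ∈ Nset T m} → BT k

/-- The sequential generator a_n (n ∈ N). -/
def aEl {k : ℕ} (T : TM k) (m : ℕ) (n : ℤ) : AA T m := fun y =>
  match y with
  | none => BT.one
  | some x => if x.1 < n then BT.one else if x.1 = n then BT.H else BT.two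

/-- The generator q^j (j ∈ {0,1,2}). -/
def qEl {k : ℕ} (T : TM k) (m : ℕ) (j : Fin 3) : AA T m := fun y =>
  match y with
  | none => BT.P j
  | some x =>
      if x.1 < 0 then BT.C false 1 false false
      else if x.1 = 0 then BT.M false 1 false
      else BT.D false 1 false false

/-- K: the subalgebra of A = B(T)^Y generated by S ∪ {q⁰,q¹,q²}
(operations computed coordinatewise). -/
inductive InK {k : ℕ} (T : TM k) (m : ℕ) : AA T m → Prop where
  | gen_a (n : ℤ) (hn : n ∈ Nset T m) : InK T m (aEl T m n)
  | gen_q (j : Fin 3) : InK T m (qEl T m j)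
  | zeroOp : InK T m fun _ => BT.zero
  | t0 {f : AA T m} : InK T m f → InK T m fun y => BT.T0 (f y)
  | t1 {f g : AA T m} : InK T m f → InK T m g → InK T m fun y => BT.T1 (f y) (g y)
  | meet {f g : AA T m} : InK T m f → InK T m g → InK T m fun y => BT.meet (f y) (g y)
  | meetI (j : Fin 3) {f g : AA T m} :
      InK T m f → InK T m g → InK T m fun y => BT.meetI j (f y) (g y)
  | jop {f g h : AA T m} : InK T m f → InK T m g → InK T m h →
      InK T m fun y => BT.J' (f y) (g y) (h y)
  | s1 {f g h p : AA T m} : InK T m f → InK T m g → InK T m h → InK T m p →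
      InK T m fun y => BT.S1 (f y) (g y) (h y) (p y)
  | s2 {f g h p q : AA T m} : InK T m f → InK T m g → InK T m h → InK T m p → InK T m q →
      InK T m fun y => BT.S2 (f y) (g y) (h y) (p y) (q y)
  | mach (i : Fin (k + 1)) (hi : i ≠ 0) (r t b : Bool) {f g h : AA T m} :
      InK T m f → InK T m g → InK T m h →
      InK T m fun y => mop T i r t b (f y) (g y) (h y)
  | u1 (i : Fin (k + 1)) (hi : i ≠ 0) (r t b : Bool) {f g h p : AA T m} :
      InK T m f → InK T m g → InK T m h → InK T m p →
      InK T m fun y => U1op (mop T i r t b) (f y) (g y) (h y) (p y)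
  | u2 (i : Fin (k + 1)) (hi : i ≠ 0) (r t b : Bool) {f g h p : AA T m} :
      InK T m f → InK T m g → InK T m h → InK T m p →
      InK T m fun y => U2op (mop T i r t b) (f y) (g y) (h y) (p y)

/-- The n-ary polynomials of the algebra K: compositions of the basic operations
(computed coordinatewise), coordinate projections, and constants from K. -/
inductive PolyK {k : ℕ} (T : TM k) (m : ℕ) :
    {n : ℕ} → ((Fin n → AA T m) → AA T m) → Prop where
  | proj {n : ℕ} (i : Fin n) : PolyK T m fun v => v i
  | const {n : ℕ} (c : AA T m) (hc : InK T m c) : PolyK T m fun _ : Fin n → AA T m => c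
  | zeroOp {n : ℕ} : PolyK T m fun (_ : Fin n → AA T m) _ => BT.zero
  | t0 {n : ℕ} {p : (Fin n → AA T m) → AA T m} :
      PolyK T m p → PolyK T m fun v y => BT.T0 (p v y)
  | t1 {n : ℕ} {p q : (Fin n → AA T m) → AA T m} :
      PolyK T m p → PolyK T m q → PolyK T m fun v y => BT.T1 (p v y) (q v y)
  | meet {n : ℕ} {p q : (Fin n → AA T m) → AA T m} :
      PolyK T m p → PolyK T m q → PolyK T m fun v y => BT.meet (p v y) (q v y)
  | meetI (j : Fin 3) {n : ℕ} {p q : (Fin n → AA T m) → AA T m} :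
      PolyK T m p → PolyK T m q → PolyK T m fun v y => BT.meetI j (p v y) (q v y)
  | jop {n : ℕ} {p q r : (Fin n → AA T m) → AA T m} :
      PolyK T m p → PolyK T m q → PolyK T m r →
      PolyK T m fun v y => BT.J' (p v y) (q v y) (r v y)
  | s1 {n : ℕ} {p q r s : (Fin n → AA T m) → AA T m} :
      PolyK T m p → PolyK T m q → PolyK T m r → PolyK T m s →
      PolyK T m fun v y => BT.S1 (p v y) (q v y) (r v y) (s v y)
  | s2 {n : ℕ} {p q r s w : (Fin n → AA T m) → AA T m} :
      PolyK T m p → PolyK T m q → PolyK T m r → PolyK T m s → PolyK T m w →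
      PolyK T m fun v y => BT.S2 (p v y) (q v y) (r v y) (s v y) (w v y)
  | mach (i : Fin (k + 1)) (hi : i ≠ 0) (r t b : Bool) {n : ℕ}
      {p q u : (Fin n → AA T m) → AA T m} :
      PolyK T m p → PolyK T m q → PolyK T m u →
      PolyK T m fun v y => mop T i r t b (p v y) (q v y) (u v y)
  | u1 (i : Fin (k + 1)) (hi : i ≠ 0) (r t b : Bool) {n : ℕ}
      {p q r' s : (Fin n → AA T m) → AA T m} :
      PolyK T m p → PolyK T m q → PolyK T m r' → PolyK T m s →
      PolyK T m fun v y => U1op (mop T i r t b) (p v y) (q v y) (r' v y) (s v y)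
  | u2 (i : Fin (k + 1)) (hi : i ≠ 0) (r t b : Bool) {n : ℕ}
      {p q r' s : (Fin n → AA T m) → AA T m} :
      PolyK T m p → PolyK T m q → PolyK T m r' → PolyK T m s →
      PolyK T m fun v y => U2op (mop T i r t b) (p v y) (q v y) (r' v y) (s v y)

/-- unary polynomials of K -/
def UPolyK {k : ℕ} (T : TM k) (m : ℕ) (F : AA T m → AA T m) : Prop :=
  PolyK T m (n := 1) fun v => F (v 0)

/-- binary polynomials of K -/
def BPolyK {k : ℕ} (T : TM k) (m : ℕ) (F : AA T m → AA T m → AA T m) : Prop :=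
  PolyK T m (n := 2) fun v => F (v 0) (v 1)

/-- Q ∈ Cfg⋆: T, started in configuration Q, reaches the halting configuration
Q_m in finitely many steps, the head visiting only squares in N. -/
def InCfgStar {k : ℕ} (T : TM k) (m : ℕ) (Q : Cfg k) : Prop :=
  ∃ j : ℕ, (cfgStep T)^[j] Q = (cfgStep T)^[m] (Q0 k) ∧
    ∀ l ≤ j, ((cfgStep T)^[l] Q).pos ∈ Nset T m

/-- β^j(Q): the encoding of the configuration Q (with P_j in coordinate s₀). -/
def betaEl {k : ℕ} (T : TM k) (m : ℕ) (j : Fin 3) (Q : Cfg k) : AA T m := fun y =>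
  match y with
  | none => BT.P j
  | some x =>
      if x.1 < Q.pos then BT.C false Q.state (Q.tape Q.pos) (Q.tape x.1)
      else if x.1 = Q.pos then BT.M false Q.state (Q.tape Q.pos)
      else BT.D false Q.state (Q.tape Q.pos) (Q.tape x.1)

/-- K₀ = {f ∈ K : f(x) = 0 for some x ∈ N}. -/
def K0 {k : ℕ} (T : TM k) (m : ℕ) : Set (AA T m) :=
  {f | InK T m f ∧ ∃ x : {x : ℤ // x ∈ Nset T m}, f (some x) = BT.zero}

/-- S = {a_n : n ∈ N}. -/
def Sset {k : ℕ} (T : TM k) (m : ℕ) : Set (AA T m) :=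
  {f | ∃ n ∈ Nset T m, f = aEl T m n}

/-- Λ = {β^j(Q) : Q ∈ Cfg⋆, j ∈ {0,1,2}}. -/
def Lam {k : ℕ} (T : TM k) (m : ℕ) : Set (AA T m) :=
  {f | ∃ (j : Fin 3) (Q : Cfg k), InCfgStar T m Q ∧ f = betaEl T m j Q}

/-- θ: (f,g) ∈ θ iff f, g ∈ K and for every unary polynomial F of K,
F(f) = q² ⇔ F(g) = q². -/
def theta {k : ℕ} (T : TM k) (m : ℕ) (f g : AA T m) : Prop :=
  InK T m f ∧ InK T m g ∧
    ∀ F : AA T m → AA T m, UPolyK T m F → (F f = qEl T m 2 ↔ F g = qEl T m 2)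

/-- A congruence of K: an equivalence relation on K preserved by all basic operations. -/
structure IsCongK {k : ℕ} (T : TM k) (m : ℕ) (R : AA T m → AA T m → Prop) : Prop where
  refl : ∀ f, InK T m f → R f f
  symm : ∀ {f g}, R f g → R g f
  trans : ∀ {f g h}, R f g → R g h → R f h
  dom : ∀ {f g}, R f g → InK T m f ∧ InK T m g
  t0 : ∀ {f f'}, R f f' → R (fun y => BT.T0 (f y)) (fun y => BT.T0 (f' y))
  t1 : ∀ {f f' g g'}, R f f' → R g g' →
    R (fun y => BT.T1 (f y) (g y)) (fun y => BT.T1 (f' y) (g' y))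
  meet : ∀ {f f' g g'}, R f f' → R g g' →
    R (fun y => BT.meet (f y) (g y)) (fun y => BT.meet (f' y) (g' y))
  meetI : ∀ (j : Fin 3) {f f' g g'}, R f f' → R g g' →
    R (fun y => BT.meetI j (f y) (g y)) (fun y => BT.meetI j (f' y) (g' y))
  jop : ∀ {f f' g g' h h'}, R f f' → R g g' → R h h' →
    R (fun y => BT.J' (f y) (g y) (h y)) (fun y => BT.J' (f' y) (g' y) (h' y))
  s1 : ∀ {f f' g g' h h' p p'}, R f f' → R g g' → R h h' → R p p' →
    R (fun y => BT.S1 (f y) (g y) (h y) (p y))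
      (fun y => BT.S1 (f' y) (g' y) (h' y) (p' y))
  s2 : ∀ {f f' g g' h h' p p' q q'}, R f f' → R g g' → R h h' → R p p' → R q q' →
    R (fun y => BT.S2 (f y) (g y) (h y) (p y) (q y))
      (fun y => BT.S2 (f' y) (g' y) (h' y) (p' y) (q' y))
  mach : ∀ (i : Fin (k + 1)), i ≠ 0 → ∀ (r t b : Bool) {f f' g g' h h'},
    R f f' → R g g' → R h h' →
    R (fun y => mop T i r t b (f y) (g y) (h y))
      (fun y => mop T i r t b (f' y) (g' y) (h' y))
  u1 : ∀ (i : Fin (k + 1)), i ≠ 0 → ∀ (r t b : Bool) {f f' g g' h h' p p'},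
    R f f' → R g g' → R h h' → R p p' →
    R (fun y => U1op (mop T i r t b) (f y) (g y) (h y) (p y))
      (fun y => U1op (mop T i r t b) (f' y) (g' y) (h' y) (p' y))
  u2 : ∀ (i : Fin (k + 1)), i ≠ 0 → ∀ (r t b : Bool) {f f' g g' h h' p p'},
    R f f' → R g g' → R h h' → R p p' →
    R (fun y => U2op (mop T i r t b) (f y) (g y) (h y) (p y))
      (fun y => U2op (mop T i r t b) (f' y) (g' y) (h' y) (p' y))

/-- θ̄: the smallest congruence of K containing θ ∪ {(q⁰,q²)} (the intersection of all
congruences of K containing θ and (q⁰,q²)). -/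
def thetaBar {k : ℕ} (T : TM k) (m : ℕ) (f g : AA T m) : Prop :=
  InK T m f ∧ InK T m g ∧
    ∀ R : AA T m → AA T m → Prop, IsCongK T m R → (∀ a b, theta T m a b → R a b) →
      R (qEl T m 0) (qEl T m 2) → R f g


section Configurations

variable {k : ℕ} {T : TM k} {m : ℕ}

theorem cfgStep_of_state_eq_zero {Q : Cfg k} (h : Q.state = 0) : cfgStep T Q = Q := by
  simp [cfgStep, h]

theorem cfgStep_iterate_of_state_eq_zero {Q : Cfg k} (h : Q.state = 0) (j : ℕ) :
    (cfgStep T)^[j] Q = Q :=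
  Function.iterate_fixed (cfgStep_of_state_eq_zero h) j

theorem cfgStep_of_instr_L {Q : Cfg k} (h : Q.state ≠ 0) {s : Bool} {i : Fin (k + 1)}
    (hi : T.instr Q.state (Q.tape Q.pos) = (s, Dir.L, i)) :
    cfgStep T Q = ⟨Function.update Q.tape Q.pos s, Q.pos - 1, i⟩ := by
  simp [cfgStep, h, hi]

theorem cfgStep_of_instr_R {Q : Cfg k} (h : Q.state ≠ 0) {s : Bool} {i : Fin (k + 1)}
    (hi : T.instr Q.state (Q.tape Q.pos) = (s, Dir.R, i)) :
    cfgStep T Q = ⟨Function.update Q.tape Q.pos s, Q.pos + 1, i⟩ := by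
  simp [cfgStep, h, hi]

/-- Each step is idle, or moves the head by one square and rewrites only the square left. -/
theorem cfgStep_cases (T : TM k) (Q : Cfg k) :
    cfgStep T Q = Q ∨ ∃ s i, cfgStep T Q = ⟨Function.update Q.tape Q.pos s, Q.pos - 1, i⟩ ∨
      cfgStep T Q = ⟨Function.update Q.tape Q.pos s, Q.pos + 1, i⟩ := by
  by_cases h : Q.state = 0
  · exact Or.inl (cfgStep_of_state_eq_zero h)
  · rcases hi : T.instr Q.state (Q.tape Q.pos) with ⟨s, _ | _, i⟩
    · exact Or.inr ⟨s, i, Or.inl (cfgStep_of_instr_L h hi)⟩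
    · exact Or.inr ⟨s, i, Or.inr (cfgStep_of_instr_R h hi)⟩

/-- Translate a configuration by `d` squares. -/
def Cfg.shift (d : ℤ) (Q : Cfg k) : Cfg k := ⟨fun x => Q.tape (x - d), Q.pos + d, Q.state⟩

theorem cfgStep_shift (d : ℤ) (Q : Cfg k) : cfgStep T (Q.shift d) = (cfgStep T Q).shift d := by
  by_cases h : Q.state = 0
  · rw [cfgStep_of_state_eq_zero h, cfgStep_of_state_eq_zero (by exact h)]
  · have ht : (Q.shift d).tape (Q.shift d).pos = Q.tape Q.pos := by simp [Cfg.shift]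
    have hu (s : Bool) : Function.update (fun x => Q.tape (x - d)) (Q.pos + d) s =
        fun x => Function.update Q.tape Q.pos s (x - d) := by
      funext x
      simp only [Function.update_apply, sub_eq_iff_eq_add]
    rcases hi : T.instr Q.state (Q.tape Q.pos) with ⟨s, _ | _, i⟩
    · rw [cfgStep_of_instr_L h hi,
        cfgStep_of_instr_L (Q := Q.shift d) (s := s) (i := i) h (by rw [ht]; exact hi)]
      simp only [Cfg.shift, hu, Cfg.mk.injEq, and_true, true_and]
      ring
    · rw [cfgStep_of_instr_R h hi,
        cfgStep_of_instr_R (Q := Q.shift d) (s := s) (i := i) h (by rw [ht]; exact hi)]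
      simp only [Cfg.shift, hu, Cfg.mk.injEq, and_true, true_and]
      ring

theorem cfgStep_iterate_shift (d : ℤ) (Q : Cfg k) (j : ℕ) :
    (cfgStep T)^[j] (Q.shift d) = ((cfgStep T)^[j] Q).shift d :=
  (Function.Semiconj.iterate_right (f := Cfg.shift d) (fun Q => (cfgStep_shift d Q).symm) j Q).symm

/-- Two halted configurations of the same computation coincide. -/
theorem cfgStep_iterate_eq_of_halted {Q : Cfg k} {i j : ℕ}
    (hi : ((cfgStep T)^[i] Q).state = 0) (hj : ((cfgStep T)^[j] Q).state = 0) :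
    (cfgStep T)^[i] Q = (cfgStep T)^[j] Q := by
  rw [← cfgStep_iterate_of_state_eq_zero (T := T) hi j,
    ← cfgStep_iterate_of_state_eq_zero (T := T) hj i, ← Function.iterate_add_apply,
    ← Function.iterate_add_apply, add_comm]

theorem tape_cfgStep_iterate_of_ne {Q : Cfg k} {x : ℤ} {j : ℕ}
    (h : ∀ l < j, ((cfgStep T)^[l] Q).pos ≠ x) : ((cfgStep T)^[j] Q).tape x = Q.tape x := by
  induction j with
  | zero => rfl
  | succ j ih =>
    rw [Function.iterate_succ_apply', ← ih fun l hl => h l (by omega)]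
    have hx := h j (by omega)
    rcases cfgStep_cases T ((cfgStep T)^[j] Q) with e | ⟨s, i, e | e⟩ <;> rw [e] <;>
      simp [Function.update_of_ne hx.symm]

theorem pos_mem_Nset {j : ℕ} (hj : j ≤ m) : ((cfgStep T)^[j] (Q0 k)).pos ∈ Nset T m := by
  simp only [Nset, Finset.mem_union, Finset.mem_image, Finset.mem_range]
  exact Or.inl ⟨j, by omega, rfl⟩

theorem exists_pos_eq_of_between (T : TM k) (j : ℕ) (x : ℤ)
    (h : (0 ≤ x ∧ x ≤ ((cfgStep T)^[j] (Q0 k)).pos) ∨ (((cfgStep T)^[j] (Q0 k)).pos ≤ x ∧ x ≤ 0)) :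
    ∃ l ≤ j, ((cfgStep T)^[l] (Q0 k)).pos = x := by
  induction j with
  | zero =>
    refine ⟨0, le_rfl, ?_⟩
    simp only [Function.iterate_zero, id_eq, Q0] at h ⊢
    omega
  | succ j ih =>
    by_cases hx : ((cfgStep T)^[j + 1] (Q0 k)).pos = x
    · exact ⟨j + 1, le_rfl, hx⟩
    · obtain ⟨l, hl, e⟩ := ih (by
        rw [Function.iterate_succ_apply'] at h hx
        rcases cfgStep_cases T ((cfgStep T)^[j] (Q0 k)) with e | ⟨s, i, e | e⟩ <;>
          rw [e] at h hx <;> (try simp only at h hx) <;> omega)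
      exact ⟨l, by omega, e⟩

theorem mem_Nset_of_between {x y : ℤ} (hy : y ∈ Nset T m)
    (h : (0 ≤ x ∧ x ≤ y) ∨ (y ≤ x ∧ x ≤ 0)) : x ∈ Nset T m := by
  simp only [Nset, Finset.mem_union, Finset.mem_image, Finset.mem_range, Finset.mem_insert,
    Finset.mem_singleton] at hy ⊢
  rcases hy with ⟨j, hj, rfl⟩ | hy
  · obtain ⟨l, hl, e⟩ := exists_pos_eq_of_between T j x h
    exact Or.inl ⟨l, by omega, e⟩
  · right
    omega

theorem succ_mem_Nset {x y : ℤ} (hx : x ∈ Nset T m) (hy : y ∈ Nset T m) (h : x < y) :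
    x + 1 ∈ Nset T m := by
  by_cases h0 : 0 ≤ x
  · exact mem_Nset_of_between hy (by omega)
  · exact mem_Nset_of_between hx (by omega)

theorem mem_Nset_of_le_one {x : ℤ} (h : -1 ≤ x) (h' : x ≤ 1) : x ∈ Nset T m := by
  simp only [Nset, Finset.mem_union, Finset.mem_insert, Finset.mem_singleton]
  omega

theorem InCfgStar.pos_mem {Q : Cfg k} (h : InCfgStar T m Q) : Q.pos ∈ Nset T m := by
  obtain ⟨j, -, h⟩ := h
  exact h 0 (Nat.zero_le j)

theorem InCfgStar.step (hm : ((cfgStep T)^[m] (Q0 k)).state = 0) {Q : Cfg k}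
    (h : InCfgStar T m Q) (h0 : Q.state ≠ 0) : InCfgStar T m (cfgStep T Q) := by
  obtain ⟨_ | j, e, h⟩ := h
  · rw [← e] at hm
    exact absurd hm h0
  · exact ⟨j, e, fun l hl => h (l + 1) (by omega)⟩

theorem InCfgStar.of_step {Q : Cfg k} (h : InCfgStar T m (cfgStep T Q))
    (hp : Q.pos ∈ Nset T m) : InCfgStar T m Q := by
  obtain ⟨j, e, h⟩ := h
  refine ⟨j + 1, e, fun l hl => ?_⟩
  cases l with
  | zero => exact hp
  | succ l => exact h l (by omega)

theorem inCfgStar_Q0 (T : TM k) (m : ℕ) : InCfgStar T m (Q0 k) :=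
  ⟨m, rfl, fun _ hl => pos_mem_Nset hl⟩

/-- A blank tape in the starting state belongs to `Cfg⋆` only if the head is at the origin. -/
theorem InCfgStar.pos_eq_zero (hm : ((cfgStep T)^[m] (Q0 k)).state = 0) {Q : Cfg k}
    (h : InCfgStar T m Q) (hs : Q.state = 1) (ht : ∀ x ∈ Nset T m, Q.tape x = false) :
    Q.pos = 0 := by
  obtain ⟨j, e, h⟩ := h
  have hQ : Q = (Q0 k).shift Q.pos := by
    rcases Q with ⟨t, n, i⟩
    simp only [Cfg.shift, Q0, zero_add, Cfg.mk.injEq, true_and]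
    refine ⟨funext fun x => ?_, hs⟩
    by_cases hx : x ∈ Nset T m
    · exact ht x hx
    · have h1 := tape_cfgStep_iterate_of_ne (T := T) (Q := ⟨t, n, i⟩) (x := x) (j := j)
        fun l hl e => hx (e ▸ h l hl.le)
      have h2 := tape_cfgStep_iterate_of_ne (T := T) (Q := Q0 k) (x := x) (j := m)
        fun l hl e => hx (e ▸ pos_mem_Nset hl.le)
      exact h1.symm.trans (e ▸ h2)
  rw [hQ, cfgStep_iterate_shift] at e
  have hj : ((cfgStep T)^[j] (Q0 k)).state = 0 := by
    rw [← e] at hm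
    exact hm
  rw [cfgStep_iterate_eq_of_halted hm hj] at e
  have := congrArg Cfg.pos e
  simpa [Cfg.shift] using this

end Configurations

section Encoding

variable {k : ℕ} {T : TM k} {m : ℕ}

/-- The value at the square `x` of the encoding of the configuration `Q`. -/
def cell (Q : Cfg k) (x : ℤ) : BT k :=
  if x < Q.pos then BT.C false Q.state (Q.tape Q.pos) (Q.tape x)
  else if x = Q.pos then BT.M false Q.state (Q.tape Q.pos)
  else BT.D false Q.state (Q.tape Q.pos) (Q.tape x)

theorem cell_of_lt {Q : Cfg k} {x : ℤ} (h : x < Q.pos) :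
    cell Q x = BT.C false Q.state (Q.tape Q.pos) (Q.tape x) := by
  simp [cell, h]

theorem cell_pos (Q : Cfg k) : cell Q Q.pos = BT.M false Q.state (Q.tape Q.pos) := by
  simp [cell]

theorem cell_of_gt {Q : Cfg k} {x : ℤ} (h : Q.pos < x) :
    cell Q x = BT.D false Q.state (Q.tape Q.pos) (Q.tape x) := by
  simp [cell, h.not_gt, h.ne']

theorem cell_cases (Q : Cfg k) (x : ℤ) :
    (x < Q.pos ∧ cell Q x = BT.C false Q.state (Q.tape Q.pos) (Q.tape x)) ∨
    (x = Q.pos ∧ cell Q x = BT.M false Q.state (Q.tape Q.pos)) ∨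
    (Q.pos < x ∧ cell Q x = BT.D false Q.state (Q.tape Q.pos) (Q.tape x)) := by
  rcases lt_trichotomy x Q.pos with h | rfl | h
  · exact Or.inl ⟨h, cell_of_lt h⟩
  · exact Or.inr (Or.inl ⟨rfl, cell_pos Q⟩)
  · exact Or.inr (Or.inr ⟨h, cell_of_gt h⟩)

/-- The value at the square `x` of the sequential generator `a_n`. -/
theorem aEl_cases (T : TM k) (m : ℕ) (n : ℤ) (x : {x : ℤ // x ∈ Nset T m}) :
    (x.1 < n ∧ aEl T m n (some x) = BT.one) ∨ (x.1 = n ∧ aEl T m n (some x) = BT.H) ∨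
      (n < x.1 ∧ aEl T m n (some x) = BT.two) := by
  rcases lt_trichotomy x.1 n with h | h | h
  · exact Or.inl ⟨h, by simp [aEl, h]⟩
  · exact Or.inr (Or.inl ⟨h, by simp [aEl, h]⟩)
  · exact Or.inr (Or.inr ⟨h, by simp [aEl, h.not_gt, h.ne']⟩)

theorem aEl_self {n : ℤ} (hn : n ∈ Nset T m) : aEl T m n (some ⟨n, hn⟩) = BT.H := by
  simp [aEl]

theorem aEl_eq_H_iff {n : ℤ} {x : {x : ℤ // x ∈ Nset T m}} :
    aEl T m n (some x) = BT.H ↔ x.1 = n := by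
  rcases aEl_cases T m n x with ⟨h, e⟩ | ⟨h, e⟩ | ⟨h, e⟩ <;> simp [e] <;> omega

theorem eq_of_aEl_eq {n n' : ℤ} (hn : n ∈ Nset T m)
    (h : ∀ x, aEl T m n (some x) = aEl T m n' (some x)) : n = n' :=
  aEl_eq_H_iff.1 ((h ⟨n, hn⟩).symm.trans (aEl_self hn))

theorem eq_succ_of_prec {n n' : ℤ} (hn : n ∈ Nset T m) (hn' : n' ∈ Nset T m)
    (h : ∀ x, prec (aEl T m n (some x)) (aEl T m n' (some x)) = true) : n' = n + 1 := by
  have hlt : n < n' := by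
    have := h ⟨n, hn⟩
    rcases aEl_cases T m n' ⟨n, hn⟩ with ⟨h, e⟩ | ⟨h, e⟩ | ⟨h, e⟩ <;>
      simp [aEl_self hn, e, prec] at this
    exact h
  have h1 := succ_mem_Nset hn hn' hlt
  have := h ⟨n + 1, h1⟩
  rcases aEl_cases T m n ⟨n + 1, h1⟩ with ⟨h, e⟩ | ⟨h, e⟩ | ⟨h, e⟩ <;> simp only at h <;>
    try omega
  rcases aEl_cases T m n' ⟨n + 1, h1⟩ with ⟨h', e'⟩ | ⟨h', e'⟩ | ⟨h', e'⟩ <;> simp only at h' <;>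
    first | omega | simp [e, e', prec] at this

end Encoding

namespace BT

variable {k : ℕ}

theorem isVV_eq_false_of_isU {x : BT k} (h : isU x = true) : isVV x = false := by
  cases x <;> simp_all [isU, isVV]

theorem le_P_iff {a b : Fin 3} : le (P a : BT k) (P b) ↔ a = b ∨ a = 2 := by
  simp only [le, reduceCtorEq, P.injEq, false_or]
  revert a b
  decide

theorem T0_P (a : Fin 3) : T0 (P a : BT k) = P (if a = 1 then 0 else 2) := by
  simp only [T0]
  split_ifs <;> rfl

theorem T1_P (a b : Fin 3) : T1 (P a : BT k) (P b) = P (if a = 0 ∨ b = 0 then 1 else 2) := by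
  fin_cases a <;> fin_cases b <;> simp [T1]

theorem meet_P (a b : Fin 3) : meet (P a : BT k) (P b) = P (if a = b then a else 2) := by
  fin_cases a <;> fin_cases b <;> simp [meet]

theorem J'_P (a b c : Fin 3) : J' (P a : BT k) (P b) (P c) = meet (P a) (P c) := by
  simp [J', isP]

theorem isP_or_isVV_of_T0_ne_zero {x : BT k} (h : T0 x ≠ zero) :
    isP x = true ∨ (isVV x = true ∧ T0 x = x) := by
  rcases x with _ | _ | _ | _ | _ | ⟨_ | _, i, _, _⟩ | ⟨_ | _, i, _, _⟩ | ⟨_ | _, i, _⟩ <;>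
    simp_all [T0, isP, isVV]

theorem eq_of_T1_ne_zero {x y : BT k} (h : T1 x y ≠ zero) (hx : isP x = false) :
    x = y ∧ isV10 x = true ∧ T1 x y = x := by
  have hP : ∀ j, x ≠ P j := by rintro j rfl; simp [isP] at hx
  simp only [T1, hP, false_and, or_self, if_false] at h ⊢
  split_ifs at h ⊢ with h'
  · exact ⟨h'.1, h'.2, rfl⟩
  · exact absurd rfl h

theorem eq_of_meet_ne_zero {x y : BT k} (h : meet x y ≠ zero) (hx : isP x = false) :
    x = y ∧ meet x y = x := by
  have hP : ∀ j, x ≠ P j := by rintro j rfl; simp [isP] at hx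
  simp only [meet, hP, false_and, and_false, or_self, if_false] at h ⊢
  split_ifs at h ⊢ with h'
  · exact ⟨h', rfl⟩
  · exact absurd rfl h

theorem ne_zero_of_meet_ne_zero {x y : BT k} (h : meet x y ≠ zero) : x ≠ zero ∧ y ≠ zero := by
  constructor
  · rintro rfl
    simp [meet] at h
  · rintro rfl
    by_cases hx : x = zero
    · simp [meet, hx] at h
    · simp [meet, hx] at h

theorem ne_zero_of_T1_ne_zero {x y : BT k} (h : T1 x y ≠ zero) : x ≠ zero := by
  rintro rfl
  simp [T1, isV10] at h

theorem eq_of_meetI_ne_zero {i : Fin 3} {x y : BT k} (h : meetI i x y ≠ zero) :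
    x = y ∧ (isP x = true ∨ isV10 x = true) ∧ x ≠ sel i := by
  by_contra h'
  exact h (if_neg h')

theorem isVV_of_isV10 {x : BT k} (h : isV10 x = true) : isVV x = true := by
  simp only [isV10, Bool.or_eq_true, beq_iff_eq] at h
  rcases h with (rfl | rfl) | rfl <;> rfl

theorem ne_zero_of_J'_ne_zero {x y z : BT k} (h : J' x y z ≠ zero) : x ≠ zero ∧ y ≠ zero := by
  simp only [J'] at h
  split_ifs at h with h1 h2
  · refine ⟨(ne_zero_of_meet_ne_zero h).1, ?_⟩
    rintro rfl
    rcases h1 with rfl | h1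
    · exact (ne_zero_of_meet_ne_zero h).1 rfl
    · simp [isP] at h1
  · refine ⟨h, ?_⟩
    rintro rfl
    simp [isVV] at h2
  · exact absurd rfl h

theorem eq_or_eq_barOp_of_J'_ne_zero {x y z : BT k} (h : J' x y z ≠ zero) (hx : isP x = false) :
    (x = y ∧ meet x z ≠ zero ∧ J' x y z = meet x z) ∨ (isVV y = true ∧ x = barOp y) := by
  simp only [J', hx, Bool.false_eq_true, false_and, or_false] at h ⊢
  split_ifs at h ⊢ with h1 h2
  · exact Or.inl ⟨h1, h, rfl⟩
  · exact Or.inr h2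
  · exact absurd rfl h

theorem eq_one_or_eq_two_of_S1_ne_zero {u x y z : BT k} (h : S1 u x y z ≠ zero) :
    (u = one ∨ u = two) ∧ isUVV x = true ∨ isP x = true := by
  simp only [S1] at h
  split_ifs at h with h1 h2
  · exact Or.inl ⟨h1.1, h1.2.2.2⟩
  · exact Or.inr h2.1
  · exact absurd rfl h

theorem eq_barOp_of_S2_ne_zero {u v x y z : BT k} (h : S2 u v x y z ≠ zero) :
    (isVV v = true ∧ u = barOp v) ∧ isVV x = true ∨ isP x = true := by
  simp only [S2] at h
  split_ifs at h with h1 h2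
  · exact Or.inl ⟨⟨h1.1, h1.2.1⟩, h1.2.2.2.2⟩
  · exact Or.inr h2.1
  · exact absurd rfl h

theorem Lop_ne_zero {i m : Fin (k + 1)} {r s t : Bool} {x y u : BT k}
    (h : Lop i r s m t x y u ≠ zero) :
    prec x y = true ∧ u ≠ zero ∧ isU u = false ∧ isU (Lop i r s m t x y u) = false := by
  cases u <;> simp only [Lop] at h ⊢ <;> (try split_ifs at h ⊢) <;> simp_all [prec, isU]

theorem Rop_ne_zero {i m : Fin (k + 1)} {r s t : Bool} {x y u : BT k}
    (h : Rop i r s m t x y u ≠ zero) :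
    prec x y = true ∧ u ≠ zero ∧ isU u = false ∧ isU (Rop i r s m t x y u) = false := by
  cases u <;> simp only [Rop] at h ⊢ <;> (try split_ifs at h ⊢) <;> simp_all [prec, isU]

end BT

section MachineOperations

variable {k : ℕ} {T : TM k} {i : Fin (k + 1)} {r t : Bool}

theorem fwd_of_instr_L {s : Bool} {j : Fin (k + 1)} (h : T.instr i r = (s, Dir.L, j)) (t : Bool) :
    fwd T i r t = BT.Lop i r s j t := by
  simp [fwd, h]

theorem fwd_of_instr_R {s : Bool} {j : Fin (k + 1)} (h : T.instr i r = (s, Dir.R, j)) (t : Bool) :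
    fwd T i r t = BT.Rop i r s j t := by
  simp [fwd, h]

theorem fwd_ne_zero {x y u : BT k} (h : fwd T i r t x y u ≠ BT.zero) :
    prec x y = true ∧ u ≠ BT.zero ∧ BT.isU u = false ∧ BT.isU (fwd T i r t x y u) = false := by
  rcases e : T.instr i r with ⟨s, _ | _, j⟩
  · rw [fwd_of_instr_L e] at h ⊢
    exact BT.Lop_ne_zero h
  · rw [fwd_of_instr_R e] at h ⊢
    exact BT.Rop_ne_zero h

theorem apply_revOp {F : BT k → BT k → BT k → BT k} {x y u : BT k}
    (h : revOp F x y u ≠ BT.zero) : F x y (revOp F x y u) = u ∧ u ≠ BT.zero := by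
  by_cases h' : u ≠ BT.zero ∧ ∃ v, F x y v = u
  · have e : revOp F x y u = h'.2.choose := by
      simp only [revOp]
      exact dif_pos h'
    exact ⟨e ▸ h'.2.choose_spec, h'.1⟩
  · exact absurd (by simp only [revOp]; exact dif_neg h') h

theorem revOp_ne_zero {F : BT k → BT k → BT k → BT k} {x y u : BT k} (hu : u ≠ BT.zero)
    (h : ∃ v, F x y v = u) : F x y (revOp F x y u) = u := by
  have e : revOp F x y u = h.choose := by
    simp only [revOp]
    exact dif_pos ⟨hu, h⟩
  exact e ▸ h.choose_spec

theorem mop_ne_zero {b : Bool} {x y u : BT k} (h : mop T i r t b x y u ≠ BT.zero) :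
    prec x y = true ∧ u ≠ BT.zero ∧ BT.isU u = false := by
  cases b
  · exact ⟨(fwd_ne_zero h).1, (fwd_ne_zero h).2.1, (fwd_ne_zero h).2.2.1⟩
  · obtain ⟨e, hu⟩ := apply_revOp h
    have := fwd_ne_zero (e.trans_ne hu)
    exact ⟨this.1, hu, e ▸ this.2.2.2⟩

theorem fwd_one_one_eq_P {a : Fin 3} {v : BT k} :
    fwd T i r t BT.one BT.one v = BT.P a ↔ v = BT.P a := by
  rcases e : T.instr i r with ⟨s, _ | _, j⟩
  · rw [fwd_of_instr_L e]
    cases v <;> simp only [BT.Lop] <;> (try split_ifs) <;> simp_all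
  · rw [fwd_of_instr_R e]
    cases v <;> simp only [BT.Rop] <;> (try split_ifs) <;> simp_all

theorem mop_one_one_P (b : Bool) (a : Fin 3) :
    mop T i r t b BT.one BT.one (BT.P a) = BT.P a := by
  cases b
  · exact fwd_one_one_eq_P.2 rfl
  · exact fwd_one_one_eq_P.1 (revOp_ne_zero (by simp) ⟨_, fwd_one_one_eq_P.2 rfl⟩)

theorem U1op_ne_zero {F : BT k → BT k → BT k → BT k} {x y z u : BT k}
    (h : U1op F x y z u ≠ BT.zero) : prec x y = true ∧ prec x z = true := by
  simp only [U1op] at h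
  split_ifs at h with h1 h2
  · exact ⟨h1.1, h1.2.1⟩
  · exact ⟨h2.1, h2.2 ▸ h2.1⟩
  · exact absurd rfl h

theorem U2op_ne_zero {F : BT k → BT k → BT k → BT k} {x y z u : BT k}
    (h : U2op F x y z u ≠ BT.zero) : prec x z = true ∧ prec y z = true := by
  simp only [U2op] at h
  split_ifs at h with h1 h2
  · exact ⟨h1.1, h1.2.1⟩
  · exact ⟨h2.1 ▸ h2.2, h2.2⟩
  · exact absurd rfl h

theorem U1op_self {F : BT k → BT k → BT k → BT k} {x y u : BT k} (h : prec x y = true) :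
    U1op F x y y u = F x y u := by
  simp [U1op, h]

theorem U2op_self {F : BT k → BT k → BT k → BT k} {x z u : BT k} (h : prec x z = true) :
    U2op F x x z u = F x z u := by
  simp [U2op, h]

theorem isU_of_prec {x y : BT k} (h : prec x y = true) : BT.isU x = true ∧ BT.isU y = true := by
  cases x <;> cases y <;> simp_all [prec, BT.isU]

theorem fwd_injective {x y u v : BT k} (h : fwd T i r t x y u = fwd T i r t x y v)
    (hu : fwd T i r t x y u ≠ BT.zero) : u = v := by
  obtain ⟨hp, -⟩ := fwd_ne_zero hu
  rcases e : T.instr i r with ⟨s, _ | _, j⟩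
  · rw [fwd_of_instr_L e] at h hu
    cases x <;> cases y <;> simp only [prec, Bool.false_eq_true] at hp <;>
      cases u <;> simp [BT.Lop] at hu <;> cases v <;> simp_all [BT.Lop] <;>
      split_ifs at h <;> simp_all
  · rw [fwd_of_instr_R e] at h hu
    cases x <;> cases y <;> simp only [prec, Bool.false_eq_true] at hp <;>
      cases u <;> simp [BT.Rop] at hu <;> cases v <;> simp_all [BT.Rop] <;>
      split_ifs at h <;> simp_all

theorem BT.Lop_H_one_ne_zero {j : Fin (k + 1)} {s : Bool} {u : BT k}
    (h : BT.Lop i r s j t BT.H BT.one u ≠ BT.zero) :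
    ∃ b, u = BT.C b i r t ∧ BT.Lop i r s j t BT.H BT.one u = BT.M b j t := by
  cases u <;> simp_all [BT.Lop]

theorem BT.Lop_two_H_ne_zero {j : Fin (k + 1)} {s : Bool} {u : BT k}
    (h : BT.Lop i r s j t BT.two BT.H u ≠ BT.zero) :
    ∃ b, u = BT.M b i r ∧ BT.Lop i r s j t BT.two BT.H u = BT.D b j t s := by
  cases u <;> simp_all [BT.Lop]

theorem BT.Rop_H_one_ne_zero {j : Fin (k + 1)} {s : Bool} {u : BT k}
    (h : BT.Rop i r s j t BT.H BT.one u ≠ BT.zero) :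
    ∃ b, u = BT.M b i r ∧ BT.Rop i r s j t BT.H BT.one u = BT.C b j t s := by
  cases u <;> simp_all [BT.Rop]

theorem BT.Rop_two_H_ne_zero {j : Fin (k + 1)} {s : Bool} {u : BT k}
    (h : BT.Rop i r s j t BT.two BT.H u ≠ BT.zero) :
    ∃ b, u = BT.D b i r t ∧ BT.Rop i r s j t BT.two BT.H u = BT.M b j t := by
  cases u <;> simp_all [BT.Rop]

end MachineOperations

section Simulation

variable {k : ℕ} {T : TM k} {m : ℕ}

theorem lt_pos_of_cell_eq_C {Q : Cfg k} {x : ℤ} {b : Bool} {i : Fin (k + 1)} {r s : Bool}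
    (h : cell Q x = BT.C b i r s) :
    x < Q.pos ∧ b = false ∧ Q.state = i ∧ Q.tape Q.pos = r ∧ Q.tape x = s := by
  rcases cell_cases Q x with ⟨hx, e⟩ | ⟨hx, e⟩ | ⟨hx, e⟩ <;> simp_all

theorem eq_pos_of_cell_eq_M {Q : Cfg k} {x : ℤ} {b : Bool} {i : Fin (k + 1)} {r : Bool}
    (h : cell Q x = BT.M b i r) :
    x = Q.pos ∧ b = false ∧ Q.state = i ∧ Q.tape Q.pos = r := by
  rcases cell_cases Q x with ⟨hx, e⟩ | ⟨hx, e⟩ | ⟨hx, e⟩ <;> simp_all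

theorem pos_lt_of_cell_eq_D {Q : Cfg k} {x : ℤ} {b : Bool} {i : Fin (k + 1)} {r s : Bool}
    (h : cell Q x = BT.D b i r s) :
    Q.pos < x ∧ b = false ∧ Q.state = i ∧ Q.tape Q.pos = r ∧ Q.tape x = s := by
  rcases cell_cases Q x with ⟨hx, e⟩ | ⟨hx, e⟩ | ⟨hx, e⟩ <;> simp_all

/-- The values at one square of two consecutive sequential generators. -/
theorem aEl_succ_cases (T : TM k) (m : ℕ) (n : ℤ) (x : {x : ℤ // x ∈ Nset T m}) :
    (x.1 < n ∧ aEl T m n (some x) = BT.one ∧ aEl T m (n + 1) (some x) = BT.one) ∨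
    (x.1 = n ∧ aEl T m n (some x) = BT.H ∧ aEl T m (n + 1) (some x) = BT.one) ∨
    (x.1 = n + 1 ∧ aEl T m n (some x) = BT.two ∧ aEl T m (n + 1) (some x) = BT.H) ∨
    (n + 1 < x.1 ∧ aEl T m n (some x) = BT.two ∧ aEl T m (n + 1) (some x) = BT.two) := by
  rcases aEl_cases T m n x with ⟨h, e⟩ | ⟨h, e⟩ | ⟨h, e⟩ <;>
    rcases aEl_cases T m (n + 1) x with ⟨h', e'⟩ | ⟨h', e'⟩ | ⟨h', e'⟩ <;> simp only [e, e'] <;>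
    simp <;> omega

theorem Lop_aEl_cell {Q : Cfg k} (h0 : Q.state ≠ 0) {s : Bool} {j : Fin (k + 1)}
    (e : T.instr Q.state (Q.tape Q.pos) = (s, Dir.L, j)) {n : ℤ} (hn : n + 1 = Q.pos)
    (x : {x : ℤ // x ∈ Nset T m}) :
    BT.Lop Q.state (Q.tape Q.pos) s j (Q.tape n) (aEl T m n (some x)) (aEl T m (n + 1) (some x))
      (cell Q x) = cell (cfgStep T Q) x := by
  obtain rfl : n = Q.pos - 1 := by omega
  rw [cfgStep_of_instr_L h0 e]
  rcases aEl_succ_cases T m (Q.pos - 1) x with ⟨h, e1, e2⟩ | ⟨h, e1, e2⟩ | ⟨h, e1, e2⟩ |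
    ⟨h, e1, e2⟩ <;> rw [e1, e2]
  · have hx : x.1 ≠ Q.pos := by omega
    rw [cell_of_lt (by omega), cell_of_lt (by exact h)]
    simp [BT.Lop, Function.update_of_ne hx]
  · rw [cell_of_lt (by omega), h]
    simp [BT.Lop, cell]
  · obtain hx : x.1 = Q.pos := by omega
    rw [hx, cell_pos, cell_of_gt (by simp)]
    simp [BT.Lop]
  · have hx : x.1 ≠ Q.pos := by omega
    rw [cell_of_gt (by omega), cell_of_gt (by simp only; omega)]
    simp [BT.Lop, Function.update_of_ne hx]

theorem Rop_aEl_cell {Q : Cfg k} (h0 : Q.state ≠ 0) {s : Bool} {j : Fin (k + 1)}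
    (e : T.instr Q.state (Q.tape Q.pos) = (s, Dir.R, j)) (x : {x : ℤ // x ∈ Nset T m}) :
    BT.Rop Q.state (Q.tape Q.pos) s j (Q.tape (Q.pos + 1)) (aEl T m Q.pos (some x))
      (aEl T m (Q.pos + 1) (some x)) (cell Q x) = cell (cfgStep T Q) x := by
  rw [cfgStep_of_instr_R h0 e]
  rcases aEl_succ_cases T m Q.pos x with ⟨h, e1, e2⟩ | ⟨h, e1, e2⟩ | ⟨h, e1, e2⟩ |
    ⟨h, e1, e2⟩ <;> rw [e1, e2]
  · rw [cell_of_lt h, cell_of_lt (by simp only; omega)]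
    simp [BT.Rop, Function.update_of_ne h.ne]
  · rw [h, cell_pos, cell_of_lt (by simp)]
    simp [BT.Rop]
  · rw [h, cell_of_gt (by omega)]
    simp [BT.Rop, cell]
  · have hx : x.1 ≠ Q.pos := by omega
    rw [cell_of_gt (by omega), cell_of_gt (by exact h)]
    simp [BT.Rop, Function.update_of_ne hx]

theorem fwd_aEl_cell {i : Fin (k + 1)} (hi : i ≠ 0) {r t : Bool} {n : ℤ} {Q : Cfg k}
    (h : fwd T i r t BT.H BT.one (cell Q n) ≠ BT.zero)
    (h' : fwd T i r t BT.two BT.H (cell Q (n + 1)) ≠ BT.zero) :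
    Q.state ≠ 0 ∧ ∀ x : {x : ℤ // x ∈ Nset T m},
      fwd T i r t (aEl T m n (some x)) (aEl T m (n + 1) (some x)) (cell Q x) =
        cell (cfgStep T Q) x := by
  rcases e : T.instr i r with ⟨s, _ | _, j⟩
  · rw [fwd_of_instr_L e] at h h' ⊢
    obtain ⟨b, hu, -⟩ := BT.Lop_H_one_ne_zero h
    obtain ⟨b', hu', -⟩ := BT.Lop_two_H_ne_zero h'
    obtain ⟨-, -, rfl, rfl, rfl⟩ := lt_pos_of_cell_eq_C hu
    exact ⟨hi, Lop_aEl_cell hi e (eq_pos_of_cell_eq_M hu').1⟩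
  · rw [fwd_of_instr_R e] at h h' ⊢
    obtain ⟨b, hu, -⟩ := BT.Rop_H_one_ne_zero h
    obtain ⟨b', hu', -⟩ := BT.Rop_two_H_ne_zero h'
    obtain ⟨rfl, -, rfl, rfl⟩ := eq_pos_of_cell_eq_M hu
    obtain ⟨-, -, -, -, rfl⟩ := pos_lt_of_cell_eq_D hu'
    exact ⟨hi, Rop_aEl_cell hi e⟩

theorem exists_fwd_aEl_cell_eq {i : Fin (k + 1)} (hi : i ≠ 0) {r t : Bool} {n : ℤ} {Q : Cfg k}
    {u v : BT k} (h : fwd T i r t BT.H BT.one u = cell Q n) (h0 : cell Q n ≠ BT.zero)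
    (h' : fwd T i r t BT.two BT.H v = cell Q (n + 1)) (h0' : cell Q (n + 1) ≠ BT.zero) :
    ∃ Q' : Cfg k, (Q'.pos = n ∨ Q'.pos = n + 1) ∧ cfgStep T Q' = Q ∧
      ∀ x : {x : ℤ // x ∈ Nset T m},
        fwd T i r t (aEl T m n (some x)) (aEl T m (n + 1) (some x)) (cell Q' x) = cell Q x := by
  rcases e : T.instr i r with ⟨s, _ | _, j⟩
  · rw [fwd_of_instr_L e] at h h' ⊢
    obtain ⟨b, -, hu⟩ := BT.Lop_H_one_ne_zero (h.trans_ne h0)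
    obtain ⟨b', -, hu'⟩ := BT.Lop_two_H_ne_zero (h'.trans_ne h0')
    obtain ⟨rfl, -, rfl, rfl⟩ := eq_pos_of_cell_eq_M (h.symm.trans hu)
    obtain ⟨-, -, -, -, rfl⟩ := pos_lt_of_cell_eq_D (h'.symm.trans hu')
    have e' : T.instr i (Function.update Q.tape (Q.pos + 1) r (Q.pos + 1)) =
        (Q.tape (Q.pos + 1), Dir.L, Q.state) := by
      rw [Function.update_self, e]
    have hQ : cfgStep T ⟨Function.update Q.tape (Q.pos + 1) r, Q.pos + 1, i⟩ = Q := by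
      rw [cfgStep_of_instr_L (by exact hi) (by exact e')]
      simp
    refine ⟨_, Or.inr rfl, hQ, fun x => ?_⟩
    have := Lop_aEl_cell (m := m) (T := T)
      (Q := ⟨Function.update Q.tape (Q.pos + 1) r, Q.pos + 1, i⟩) hi e' rfl x
    rw [hQ] at this
    simpa using this
  · rw [fwd_of_instr_R e] at h h' ⊢
    obtain ⟨b, -, hu⟩ := BT.Rop_H_one_ne_zero (h.trans_ne h0)
    obtain ⟨b', -, hu'⟩ := BT.Rop_two_H_ne_zero (h'.trans_ne h0')
    obtain ⟨hp, -, rfl, rfl⟩ := eq_pos_of_cell_eq_M (h'.symm.trans hu')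
    obtain ⟨-, -, -, -, rfl⟩ := lt_pos_of_cell_eq_C (h.symm.trans hu)
    have e' : T.instr i (Function.update Q.tape n r n) = (Q.tape n, Dir.R, Q.state) := by
      rw [Function.update_self, e]
    have hQ : cfgStep T ⟨Function.update Q.tape n r, n, i⟩ = Q := by
      rw [cfgStep_of_instr_R (by exact hi) (by exact e')]
      simp [hp]
    refine ⟨_, Or.inl rfl, hQ, fun x => ?_⟩
    have := Rop_aEl_cell (m := m) (T := T) (Q := ⟨Function.update Q.tape n r, n, i⟩) hi e' x
    rw [hQ] at this
    simpa [← hp] using this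

/-- A machine operation that produces no zero on the encoding of a configuration in `Cfg⋆`
yields the encoding of another configuration in `Cfg⋆`. -/
theorem InCfgStar.exists_mop_eq_cell (hm : ((cfgStep T)^[m] (Q0 k)).state = 0)
    {i : Fin (k + 1)} (hi : i ≠ 0) {r t b : Bool} {n : ℤ} (hn : n ∈ Nset T m)
    (hn' : n + 1 ∈ Nset T m) {Q : Cfg k} (hQ : InCfgStar T m Q)
    (h : ∀ x : {x : ℤ // x ∈ Nset T m},
      mop T i r t b (aEl T m n (some x)) (aEl T m (n + 1) (some x)) (cell Q x) ≠ BT.zero) :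
    ∃ Q', InCfgStar T m Q' ∧ ∀ x : {x : ℤ // x ∈ Nset T m},
      mop T i r t b (aEl T m n (some x)) (aEl T m (n + 1) (some x)) (cell Q x) = cell Q' x := by
  have h1 := h ⟨n, hn⟩
  have h2 := h ⟨n + 1, hn'⟩
  have e1 : aEl T m (n + 1) (some ⟨n, hn⟩) = BT.one := by simp [aEl]
  have e2 : aEl T m n (some ⟨n + 1, hn'⟩) = BT.two := by simp [aEl]
  rw [aEl_self, e1] at h1
  rw [aEl_self, e2] at h2
  cases b
  · obtain ⟨h0, hx⟩ := fwd_aEl_cell (m := m) hi h1 h2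
    exact ⟨_, hQ.step hm h0, hx⟩
  · obtain ⟨f1, g1⟩ := apply_revOp h1
    obtain ⟨f2, g2⟩ := apply_revOp h2
    obtain ⟨Q', hp, rfl, hx⟩ := exists_fwd_aEl_cell_eq (m := m) hi f1 g1 f2 g2
    refine ⟨Q', hQ.of_step (by rcases hp with hp | hp <;> rwa [hp]), fun x => ?_⟩
    obtain ⟨f, g⟩ := apply_revOp (h x)
    exact fwd_injective (f.trans (hx x).symm) (f.trans_ne g)

end Simulation

section OrderRelation

variable {k : ℕ} {T : TM k} {m : ℕ} {f f' g g' h h' p p' q q' : AA T m}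

/-- Both elements are the same sequential generator. -/
def IsSeq (f f' : AA T m) : Prop :=
  ∃ n ∈ Nset T m, f = aEl T m n ∧ f' = aEl T m n

/-- `f ≤ f'`, and `f` restricted to `N` encodes a configuration in `Cfg⋆`. -/
def IsConf (f f' : AA T m) : Prop :=
  ∃ Q, InCfgStar T m Q ∧ (∀ x : {x : ℤ // x ∈ Nset T m}, f (some x) = cell Q x) ∧
    ∃ a b, f none = BT.P a ∧ f' none = BT.P b ∧ (a = b ∨ a = 2)

/-- The binary relation on `K` that all operations preserve: agreement on `N`, together with
`f ≤ f'` unless some value on `N` is zero. -/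
def OrderRel (f f' : AA T m) : Prop :=
  (∀ x, f (some x) = f' (some x)) ∧ ((∃ x, f (some x) = BT.zero) ∨ IsSeq f f' ∨ IsConf f f')

theorem OrderRel.of_ne_zero (ag : ∀ x, f (some x) = f' (some x))
    (h : (∀ x, f (some x) ≠ BT.zero) → IsSeq f f' ∨ IsConf f f') : OrderRel f f' := by
  refine ⟨ag, ?_⟩
  by_cases hz : ∃ x, f (some x) = BT.zero
  · exact Or.inl hz
  · exact Or.inr (h (not_exists.1 hz))

theorem OrderRel.isSeq_or_isConf (hf : OrderRel f f') (hz : ∀ x, f (some x) ≠ BT.zero) :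
    IsSeq f f' ∨ IsConf f f' :=
  hf.2.resolve_left fun ⟨x, hx⟩ => hz x hx

/-- The square `0`. -/
def origin (T : TM k) (m : ℕ) : {x : ℤ // x ∈ Nset T m} :=
  ⟨0, mem_Nset_of_le_one (by omega) (by omega)⟩

theorem isU_aEl (n : ℤ) (y : Option {x : ℤ // x ∈ Nset T m}) : BT.isU (aEl T m n y) = true := by
  rcases y with _ | x
  · rfl
  · rcases aEl_cases T m n x with ⟨-, e⟩ | ⟨-, e⟩ | ⟨-, e⟩ <;> rw [e] <;> rfl

theorem isVV_cell (Q : Cfg k) (x : ℤ) : BT.isVV (cell Q x) = true := by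
  rcases cell_cases Q x with ⟨-, e⟩ | ⟨-, e⟩ | ⟨-, e⟩ <;> rw [e] <;> rfl

theorem cell_ne_barOp_cell (Q Q' : Cfg k) (x : ℤ) : cell Q x ≠ BT.barOp (cell Q' x) := by
  rcases cell_cases Q x with ⟨-, e⟩ | ⟨-, e⟩ | ⟨-, e⟩ <;>
    rcases cell_cases Q' x with ⟨-, e'⟩ | ⟨-, e'⟩ | ⟨-, e'⟩ <;> simp [e, e', BT.barOp]

theorem IsSeq.isU (hf : IsSeq f f') (x) : BT.isU (f x) = true := by
  obtain ⟨n, -, rfl, -⟩ := hf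
  exact isU_aEl n x

theorem IsSeq.not_isVV (hf : IsSeq f f') (x) : ¬ BT.isVV (f x) = true := by
  simp [BT.isVV_eq_false_of_isU (hf.isU x)]

theorem IsConf.isVV (hf : IsConf f f') (x) : BT.isVV (f (some x)) = true := by
  obtain ⟨Q, -, hQ, -⟩ := hf
  exact hQ x ▸ isVV_cell Q x

theorem IsConf.not_isU (hf : IsConf f f') (x) : ¬ BT.isU (f (some x)) = true :=
  fun h => by simpa [BT.isVV_eq_false_of_isU h] using hf.isVV x

theorem IsConf.ne_barOp (hf : IsConf f f') (hg : IsConf g g') (x) :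
    f (some x) ≠ BT.barOp (g (some x)) := by
  obtain ⟨Q, -, hQ, -⟩ := hf
  obtain ⟨Q', -, hQ', -⟩ := hg
  rw [hQ, hQ']
  exact cell_ne_barOp_cell Q Q' x

theorem IsConf.isConf_of_eq (hf : IsConf f f') (hg : ∀ x, g (some x) = f (some x)) {a b : Fin 3}
    (ha : g none = BT.P a) (hb : g' none = BT.P b) (hab : a = b ∨ a = 2) : IsConf g g' := by
  obtain ⟨Q, hQ, hx, -⟩ := hf
  exact ⟨Q, hQ, fun x => (hg x).trans (hx x), a, b, ha, hb, hab⟩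

theorem OrderRel.isP_eq_false (hf : OrderRel f f') (hz : ∀ x, f (some x) ≠ BT.zero) (x) :
    BT.isP (f (some x)) = false := by
  rcases hf.isSeq_or_isConf hz with h | h
  · have := h.isU (some x)
    cases e : f (some x) <;> simp_all [BT.isU, BT.isP]
  · have := h.isVV x
    cases e : f (some x) <;> simp_all [BT.isVV, BT.isP]

theorem OrderRel.isConf (hf : OrderRel f f') (hV : ∀ x, BT.isVV (f (some x)) = true) :
    IsConf f f' := by
  refine (hf.isSeq_or_isConf fun x e => ?_).resolve_left fun h =>
    h.not_isVV (some (origin T m)) (hV _)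
  simpa [e, BT.isVV] using hV x

theorem OrderRel.isSeq (hf : OrderRel f f') (hU : ∀ x, BT.isU (f (some x)) = true) :
    IsSeq f f' := by
  refine (hf.isSeq_or_isConf fun x e => ?_).resolve_right fun h =>
    h.not_isU (origin T m) (hU _)
  simpa [e, BT.isU] using hU x

theorem IsSeq.eq_of_eq (hf : IsSeq f f') (hg : IsSeq g g')
    (h : ∀ x, f (some x) = g (some x)) : f = g ∧ f' = g' := by
  obtain ⟨n, hn, rfl, rfl⟩ := hf
  obtain ⟨n', -, rfl, rfl⟩ := hg
  rw [eq_of_aEl_eq hn h]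
  exact ⟨rfl, rfl⟩

theorem orderRel_zero : OrderRel (fun _ => BT.zero : AA T m) fun _ => BT.zero :=
  ⟨fun _ => rfl, Or.inl ⟨origin T m, rfl⟩⟩

theorem orderRel_aEl {n : ℤ} (hn : n ∈ Nset T m) : OrderRel (aEl T m n) (aEl T m n) :=
  ⟨fun _ => rfl, Or.inr (Or.inl ⟨n, hn, rfl, rfl⟩)⟩

theorem orderRel_qEl {a b : Fin 3} (h : a = b ∨ a = 2) :
    OrderRel (qEl T m a) (qEl T m b) :=
  ⟨fun _ => rfl, Or.inr (Or.inr ⟨Q0 k, inCfgStar_Q0 T m, fun _ => rfl, a, b, rfl, rfl, h⟩)⟩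

theorem OrderRel.t0 (hf : OrderRel f f') :
    OrderRel (fun y => BT.T0 (f y)) fun y => BT.T0 (f' y) := by
  refine .of_ne_zero (fun x => by rw [hf.1]) fun hz => Or.inr ?_
  have hP := hf.isP_eq_false fun x e => hz x (by simp [e, BT.T0])
  have hV x := (BT.isP_or_isVV_of_T0_ne_zero (hz x)).resolve_left (by simp [hP x])
  have hc := hf.isConf fun x => (hV x).1
  obtain ⟨-, -, -, a, b, ha, hb, hab⟩ := id hc
  refine hc.isConf_of_eq (fun x => (hV x).2) (by simp only [ha, BT.T0_P]; rfl)
    (by simp only [hb, BT.T0_P]; rfl) ?_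
  clear * - hab
  revert a b
  decide

theorem OrderRel.t1 (hf : OrderRel f f') (hg : OrderRel g g') :
    OrderRel (fun y => BT.T1 (f y) (g y)) fun y => BT.T1 (f' y) (g' y) := by
  refine .of_ne_zero (fun x => by rw [hf.1, hg.1]) fun hz => Or.inr ?_
  have hP := hf.isP_eq_false fun x => BT.ne_zero_of_T1_ne_zero (hz x)
  have he x := BT.eq_of_T1_ne_zero (hz x) (hP x)
  have hc := hf.isConf fun x => BT.isVV_of_isV10 (he x).2.1
  have hd := hg.isConf fun x => (he x).1 ▸ BT.isVV_of_isV10 (he x).2.1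
  obtain ⟨-, -, -, a, b, ha, hb, hab⟩ := id hc
  obtain ⟨-, -, -, c, d, hc', hd', hcd⟩ := id hd
  refine hc.isConf_of_eq (fun x => (he x).2.2) (by simp only [ha, hc', BT.T1_P]; rfl)
    (by simp only [hb, hd', BT.T1_P]; rfl) ?_
  clear * - hab hcd
  revert a b c d
  decide

theorem OrderRel.meet (hf : OrderRel f f') (hg : OrderRel g g') :
    OrderRel (fun y => BT.meet (f y) (g y)) fun y => BT.meet (f' y) (g' y) := by
  refine .of_ne_zero (fun x => by rw [hf.1, hg.1]) fun hz => ?_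
  have hf0 x := (BT.ne_zero_of_meet_ne_zero (hz x)).1
  have he x := BT.eq_of_meet_ne_zero (hz x) (hf.isP_eq_false hf0 x)
  rcases hf.isSeq_or_isConf hf0 with hs | hc
  · obtain ⟨rfl, rfl⟩ := hs.eq_of_eq (hg.isSeq fun x => (he x).1 ▸ hs.isU _) fun x => (he x).1
    left
    simpa [BT.meet] using hs
  · right
    have hd := hg.isConf fun x => (he x).1 ▸ hc.isVV x
    obtain ⟨-, -, -, a, b, ha, hb, hab⟩ := id hc
    obtain ⟨-, -, -, c, d, hc', hd', hcd⟩ := id hd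
    refine hc.isConf_of_eq (fun x => (he x).2) (by simp only [ha, hc', BT.meet_P]; rfl)
      (by simp only [hb, hd', BT.meet_P]; rfl) ?_
    clear * - hab hcd
    revert a b c d
    decide

/-- Among the configurations of `Cfg⋆`, only the initial one is encoded by values in `V₁₀⁰`. -/
theorem InCfgStar.pos_eq_zero_of_isV10 (hm : ((cfgStep T)^[m] (Q0 k)).state = 0) {Q : Cfg k}
    (hQ : InCfgStar T m Q) (hV : ∀ x ∈ Nset T m, BT.isV10 (cell Q x) = true) :
    Q.pos = 0 ∧ Q.state = 1 ∧ ∀ x ∈ Nset T m, Q.tape x = false := by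
  have hp := hV _ hQ.pos_mem
  simp only [cell_pos, BT.isV10, reduceCtorEq, beq_iff_eq, Bool.or_eq_true, BT.M.injEq,
    true_and, or_false, false_or] at hp
  have ht : ∀ x ∈ Nset T m, Q.tape x = false := by
    intro x hx
    have := hV x hx
    rcases cell_cases Q x with ⟨-, e⟩ | ⟨rfl, -⟩ | ⟨-, e⟩
    · simp only [e, BT.isV10, reduceCtorEq, beq_iff_eq, Bool.or_eq_true, BT.C.injEq] at this
      tauto
    · exact hp.2
    · simp only [e, BT.isV10, reduceCtorEq, beq_iff_eq, Bool.or_eq_true, BT.D.injEq] at this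
      tauto
  exact ⟨hQ.pos_eq_zero hm hp.1 ht, hp.1, ht⟩

theorem OrderRel.meetI (hm : ((cfgStep T)^[m] (Q0 k)).state = 0) (i : Fin 3)
    (hf : OrderRel f f') (hg : OrderRel g g') :
    OrderRel (fun y => BT.meetI i (f y) (g y)) fun y => BT.meetI i (f' y) (g' y) := by
  refine .of_ne_zero (fun x => by rw [hf.1, hg.1]) fun hz => ?_
  have he x := BT.eq_of_meetI_ne_zero (hz x)
  have hP := hf.isP_eq_false fun x e => hz x (by simp [e, BT.meetI])
  have hV x := (he x).2.1.resolve_left (by simp [hP x])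
  obtain ⟨Q, hQ, hx, -⟩ := hf.isConf fun x => BT.isVV_of_isV10 (hV x)
  obtain ⟨h0, h1, ht⟩ := hQ.pos_eq_zero_of_isV10 hm fun x hx' => hx ⟨x, hx'⟩ ▸ hV ⟨x, hx'⟩
  have hs (y : ℤ) (hy : -1 ≤ y) (hy' : y ≤ 1) : cell Q y ≠ BT.sel i := by
    have := (he ⟨y, mem_Nset_of_le_one hy hy'⟩).2.2
    rwa [hx] at this
  have ht' (y : ℤ) (hy : -1 ≤ y) (hy' : y ≤ 1) := ht y (mem_Nset_of_le_one hy hy')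
  exfalso
  fin_cases i
  · refine hs (-1) (by omega) (by omega) ?_
    rw [cell_of_lt (by omega), h0, h1, ht' 0 (by omega) (by omega),
      ht' (-1) (by omega) (by omega)]
    rfl
  · refine hs 0 (by omega) (by omega) ?_
    rw [← h0, cell_pos, h0, h1, ht' 0 (by omega) (by omega)]
    rfl
  · refine hs 1 (by omega) (by omega) ?_
    rw [cell_of_gt (by omega), h0, h1, ht' 0 (by omega) (by omega), ht' 1 (by omega) (by omega)]
    rfl

theorem OrderRel.jop (hf : OrderRel f f') (hg : OrderRel g g') (hh : OrderRel h h') :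
    OrderRel (fun y => BT.J' (f y) (g y) (h y)) fun y => BT.J' (f' y) (g' y) (h' y) := by
  refine .of_ne_zero (fun x => by rw [hf.1, hg.1, hh.1]) fun hz => ?_
  have hf0 x := (BT.ne_zero_of_J'_ne_zero (hz x)).1
  have hg0 x := (BT.ne_zero_of_J'_ne_zero (hz x)).2
  have he x := BT.eq_or_eq_barOp_of_J'_ne_zero (hz x) (hf.isP_eq_false hf0 x)
  have hmeet := hf.meet hh
  rcases hf.isSeq_or_isConf hf0 with hs | hc
  · have he' x := (he x).resolve_right fun h => hs.not_isVV (some x) (by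
      rw [h.2]
      cases e : g (some x) <;> simp_all [BT.isVV, BT.barOp])
    obtain ⟨rfl, rfl⟩ := hs.eq_of_eq (hg.isSeq fun x => (he' x).1 ▸ hs.isU _) fun x => (he' x).1
    simpa [BT.J'] using hmeet.isSeq_or_isConf fun x => (he' x).2.1
  · have hd : IsConf g g' := hg.isConf fun x => by
      rcases he x with h | h
      · exact h.1 ▸ hc.isVV x
      · exact h.1
    have he' x := (he x).resolve_right fun h => hc.ne_barOp hd x h.2
    right
    have hc' : IsConf (fun y => BT.meet (f y) (h y)) fun y => BT.meet (f' y) (h' y) :=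
      hmeet.isConf fun x =>
        (BT.eq_of_meet_ne_zero (he' x).2.1 (hf.isP_eq_false hf0 x)).2.symm ▸ hc.isVV x
    have hh' : IsConf h h' := hh.isConf fun x =>
      (BT.eq_of_meet_ne_zero (he' x).2.1 (hf.isP_eq_false hf0 x)).1 ▸ hc.isVV x
    obtain ⟨-, -, -, a, b, ha, hb, -⟩ := id hc
    obtain ⟨-, -, -, c, d, hg1, hg2, -⟩ := id hd
    obtain ⟨-, -, -, c', d', hh1, hh2, -⟩ := id hh'
    obtain ⟨-, -, -, u, v, hu, hv, huv⟩ := id hc'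
    refine hc'.isConf_of_eq (fun x => (he' x).2.2) (a := u) (b := v) ?_ ?_ huv
    · rw [← hu]
      simp only [ha, hg1, hh1, BT.J'_P]
    · rw [← hv]
      simp only [hb, hg2, hh2, BT.J'_P]

theorem OrderRel.s1 (hf : OrderRel f f') (hg : OrderRel g g') (hh : OrderRel h h')
    (hp : OrderRel p p') :
    OrderRel (fun y => BT.S1 (f y) (g y) (h y) (p y))
      fun y => BT.S1 (f' y) (g' y) (h' y) (p' y) := by
  refine .of_ne_zero (fun x => by rw [hf.1, hg.1, hh.1, hp.1]) fun hz => ?_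
  have he x := BT.eq_one_or_eq_two_of_S1_ne_zero (hz x)
  have hP := hg.isP_eq_false fun x e => by simpa [e, BT.isUVV, BT.isU, BT.isVV, BT.isP] using he x
  have hu x := ((he x).resolve_right (by simp [hP x])).1
  obtain ⟨n, hn, rfl, -⟩ := hf.isSeq fun x => by rcases hu x with e | e <;> rw [e] <;> rfl
  simpa [aEl_self] using hu ⟨n, hn⟩

theorem OrderRel.s2 (hf : OrderRel f f') (hg : OrderRel g g') (hh : OrderRel h h')
    (hp : OrderRel p p') (hq : OrderRel q q') :
    OrderRel (fun y => BT.S2 (f y) (g y) (h y) (p y) (q y))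
      fun y => BT.S2 (f' y) (g' y) (h' y) (p' y) (q' y) := by
  refine .of_ne_zero (fun x => by rw [hf.1, hg.1, hh.1, hp.1, hq.1]) fun hz => ?_
  have he x := BT.eq_barOp_of_S2_ne_zero (hz x)
  have hP := hh.isP_eq_false fun x e => by simpa [e, BT.isVV, BT.isP] using he x
  have hu x := ((he x).resolve_right (by simp [hP x])).1
  have hd := hg.isConf fun x => (hu x).1
  have hc := hf.isConf fun x => by
    rw [(hu x).2]
    have := (hu x).1
    cases e : g (some x) <;> simp_all [BT.isVV, BT.barOp]
  exact absurd (hu (origin T m)).2 (hc.ne_barOp hd _)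

theorem OrderRel.mach (hm : ((cfgStep T)^[m] (Q0 k)).state = 0) {i : Fin (k + 1)} (hi : i ≠ 0)
    (r t b : Bool) (hf : OrderRel f f') (hg : OrderRel g g') (hh : OrderRel h h') :
    OrderRel (fun y => mop T i r t b (f y) (g y) (h y))
      fun y => mop T i r t b (f' y) (g' y) (h' y) := by
  refine .of_ne_zero (fun x => by rw [hf.1, hg.1, hh.1]) fun hz => Or.inr ?_
  have he x := mop_ne_zero (hz x)
  obtain ⟨n, hn, rfl, rfl⟩ := hf.isSeq fun x => (isU_of_prec (he x).1).1
  obtain ⟨n', hn', rfl, rfl⟩ := hg.isSeq fun x => (isU_of_prec (he x).1).2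
  obtain rfl := eq_succ_of_prec hn hn' fun x => (he x).1
  obtain ⟨Q, hQ, hx, a, c, ha, hc, hac⟩ := (hh.isSeq_or_isConf fun x => (he x).2.1).resolve_left
    fun hs => by simpa [(he (origin T m)).2.2] using hs.isU (some (origin T m))
  obtain ⟨Q', hQ', hx'⟩ := hQ.exists_mop_eq_cell hm hi hn hn' fun x => hx x ▸ hz x
  refine ⟨Q', hQ', fun x => ?_, a, c, ?_, ?_, hac⟩
  · rw [← hx', ← hx]
  · simp only [ha]
    exact mop_one_one_P b a
  · simp only [hc]
    exact mop_one_one_P b c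

/-- A sequential generator has at most one successor. -/
theorem IsSeq.eq_of_prec (hf : IsSeq f f') (hg : IsSeq g g') (hh : IsSeq h h')
    (hfg : ∀ x, prec (f (some x)) (g (some x)) = true)
    (hfh : ∀ x, prec (f (some x)) (h (some x)) = true) :
    g = h ∧ g' = h' := by
  obtain ⟨n, hn, rfl, rfl⟩ := hf
  obtain ⟨n₁, hn₁, rfl, rfl⟩ := hg
  obtain ⟨n₂, hn₂, rfl, rfl⟩ := hh
  rw [eq_succ_of_prec hn hn₁ hfg, eq_succ_of_prec hn hn₂ hfh]
  exact ⟨rfl, rfl⟩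

/-- A sequential generator has at most one predecessor. -/
theorem IsSeq.eq_of_prec_right (hf : IsSeq f f') (hg : IsSeq g g') (hh : IsSeq h h')
    (hfh : ∀ x, prec (f (some x)) (h (some x)) = true)
    (hgh : ∀ x, prec (g (some x)) (h (some x)) = true) :
    f = g ∧ f' = g' := by
  obtain ⟨n, hn, rfl, rfl⟩ := hf
  obtain ⟨n₁, hn₁, rfl, rfl⟩ := hg
  obtain ⟨n₂, hn₂, rfl, rfl⟩ := hh
  obtain rfl : n = n₁ := by
    have := eq_succ_of_prec hn hn₂ hfh
    have := eq_succ_of_prec hn₁ hn₂ hgh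
    omega
  exact ⟨rfl, rfl⟩

theorem IsSeq.prec_apply (hf : IsSeq f f') (hg : IsSeq g g')
    (hfg : ∀ x, prec (f (some x)) (g (some x)) = true) (y) :
    prec (f y) (g y) = true ∧ prec (f' y) (g' y) = true := by
  obtain ⟨n, hn, rfl, rfl⟩ := hf
  obtain ⟨n₁, hn₁, rfl, rfl⟩ := hg
  rw [and_self]
  cases y
  · rfl
  · exact hfg _

theorem OrderRel.u1 (hm : ((cfgStep T)^[m] (Q0 k)).state = 0) {i : Fin (k + 1)} (hi : i ≠ 0)
    (r t b : Bool) (hf : OrderRel f f') (hg : OrderRel g g') (hh : OrderRel h h')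
    (hp : OrderRel p p') :
    OrderRel (fun y => U1op (mop T i r t b) (f y) (g y) (h y) (p y))
      fun y => U1op (mop T i r t b) (f' y) (g' y) (h' y) (p' y) := by
  refine .of_ne_zero (fun x => by rw [hf.1, hg.1, hh.1, hp.1]) fun hz => ?_
  have h1 x := (U1op_ne_zero (hz x)).1
  have h2 x := (U1op_ne_zero (hz x)).2
  have sf := hf.isSeq fun x => (isU_of_prec (h1 x)).1
  have sg := hg.isSeq fun x => (isU_of_prec (h1 x)).2
  obtain ⟨rfl, rfl⟩ := sf.eq_of_prec sg (hh.isSeq fun x => (isU_of_prec (h2 x)).2) h1 h2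
  have hpr := sf.prec_apply sg h1
  simp only [U1op_self (hpr _).1, U1op_self (hpr _).2] at hz ⊢
  exact (hf.mach hm hi r t b hg hp).isSeq_or_isConf hz

theorem OrderRel.u2 (hm : ((cfgStep T)^[m] (Q0 k)).state = 0) {i : Fin (k + 1)} (hi : i ≠ 0)
    (r t b : Bool) (hf : OrderRel f f') (hg : OrderRel g g') (hh : OrderRel h h')
    (hp : OrderRel p p') :
    OrderRel (fun y => U2op (mop T i r t b) (f y) (g y) (h y) (p y))
      fun y => U2op (mop T i r t b) (f' y) (g' y) (h' y) (p' y) := by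
  refine .of_ne_zero (fun x => by rw [hf.1, hg.1, hh.1, hp.1]) fun hz => ?_
  have h1 x := (U2op_ne_zero (hz x)).1
  have h2 x := (U2op_ne_zero (hz x)).2
  have sf := hf.isSeq fun x => (isU_of_prec (h1 x)).1
  have sh := hh.isSeq fun x => (isU_of_prec (h1 x)).2
  obtain ⟨rfl, rfl⟩ := sf.eq_of_prec_right (hg.isSeq fun x => (isU_of_prec (h2 x)).1) sh h1 h2
  have hpr := sf.prec_apply sh h1
  simp only [U2op_self (hpr _).1, U2op_self (hpr _).2] at hz ⊢
  exact (hf.mach hm hi r t b hh hp).isSeq_or_isConf hz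

theorem InK.orderRel (hm : ((cfgStep T)^[m] (Q0 k)).state = 0) {c : AA T m} (hc : InK T m c) :
    OrderRel c c := by
  induction hc with
  | gen_a n hn => exact orderRel_aEl hn
  | gen_q j => exact orderRel_qEl (Or.inl rfl)
  | zeroOp => exact orderRel_zero
  | t0 _ h₁ => exact h₁.t0
  | t1 _ _ h₁ h₂ => exact h₁.t1 h₂
  | meet _ _ h₁ h₂ => exact h₁.meet h₂
  | meetI j _ _ h₁ h₂ => exact h₁.meetI hm j h₂
  | jop _ _ _ h₁ h₂ h₃ => exact h₁.jop h₂ h₃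
  | s1 _ _ _ _ h₁ h₂ h₃ h₄ => exact h₁.s1 h₂ h₃ h₄
  | s2 _ _ _ _ _ h₁ h₂ h₃ h₄ h₅ => exact h₁.s2 h₂ h₃ h₄ h₅
  | mach i hi r t b _ _ _ h₁ h₂ h₃ => exact h₁.mach hm hi r t b h₂ h₃
  | u1 i hi r t b _ _ _ _ h₁ h₂ h₃ h₄ => exact h₁.u1 hm hi r t b h₂ h₃ h₄
  | u2 i hi r t b _ _ _ _ h₁ h₂ h₃ h₄ => exact h₁.u2 hm hi r t b h₂ h₃ h₄

theorem PolyK.orderRel (hm : ((cfgStep T)^[m] (Q0 k)).state = 0) {n : ℕ}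
    {F : (Fin n → AA T m) → AA T m} (hF : PolyK T m F) {v w : Fin n → AA T m}
    (hvw : ∀ i, OrderRel (v i) (w i)) : OrderRel (F v) (F w) := by
  induction hF with
  | proj i => exact hvw i
  | const c hc => exact hc.orderRel hm
  | zeroOp => exact orderRel_zero
  | t0 _ h₁ => exact (h₁ hvw).t0
  | t1 _ _ h₁ h₂ => exact (h₁ hvw).t1 (h₂ hvw)
  | meet _ _ h₁ h₂ => exact (h₁ hvw).meet (h₂ hvw)
  | meetI j _ _ h₁ h₂ => exact (h₁ hvw).meetI hm j (h₂ hvw)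
  | jop _ _ _ h₁ h₂ h₃ => exact (h₁ hvw).jop (h₂ hvw) (h₃ hvw)
  | s1 _ _ _ _ h₁ h₂ h₃ h₄ => exact (h₁ hvw).s1 (h₂ hvw) (h₃ hvw) (h₄ hvw)
  | s2 _ _ _ _ _ h₁ h₂ h₃ h₄ h₅ =>
    exact (h₁ hvw).s2 (h₂ hvw) (h₃ hvw) (h₄ hvw) (h₅ hvw)
  | mach i hi r t b _ _ _ h₁ h₂ h₃ => exact (h₁ hvw).mach hm hi r t b (h₂ hvw) (h₃ hvw)
  | u1 i hi r t b _ _ _ _ h₁ h₂ h₃ h₄ =>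
    exact (h₁ hvw).u1 hm hi r t b (h₂ hvw) (h₃ hvw) (h₄ hvw)
  | u2 i hi r t b _ _ _ _ h₁ h₂ h₃ h₄ =>
    exact (h₁ hvw).u2 hm hi r t b (h₂ hvw) (h₃ hvw) (h₄ hvw)

end OrderRelation

/-- Lemma 4.2(4): every unary polynomial of K mapping {q⁰,q¹,q²} into
itself is order-preserving there for the componentwise order. -/
theorem statement15 {k : ℕ} (hk : 0 < k) (T : TM k) (m : ℕ)
    (hm : ((cfgStep T)^[m] (Q0 k)).state = 0) :
    ∀ F : AA T m → AA T m, UPolyK T m F →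
      (∀ j : Fin 3, ∃ j' : Fin 3, F (qEl T m j) = qEl T m j') →
      ∀ j₁ j₂ : Fin 3,
        (∀ y, BT.le (qEl T m j₁ y) (qEl T m j₂ y)) →
        (∀ y, BT.le (F (qEl T m j₁) y) (F (qEl T m j₂) y)) := by
  intro F hF hq j₁ j₂ hle y
  have hrel : OrderRel (F (qEl T m j₁)) (F (qEl T m j₂)) :=
    PolyK.orderRel (v := fun _ => qEl T m j₁) (w := fun _ => qEl T m j₂) hm hF
      fun _ => orderRel_qEl (BT.le_P_iff.1 (hle none))
  obtain ⟨j, hj⟩ := hq j₁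
  have hV x : BT.isVV (F (qEl T m j₁) (some x)) = true := by
    rw [hj]
    exact isVV_cell (Q0 k) x
  obtain ⟨-, -, -, a, b, ha, hb, hab⟩ := hrel.isConf hV
  rcases y with _ | x
  · rw [ha, hb]
    exact BT.le_P_iff.2 hab
  · exact Or.inr (Or.inl (hrel.1 x))

end Paper
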